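/- For a (k, L, n)-threshold ramp quantum secret sharing scheme with shares H_1,…,H_n encoding states on H, and for every probability measure μ supported on pure states of H with barycenter σ_μ: (1/L)·H(σ_μ) ≤ (1/n)·∑_{i=1}^n H(W_i(σ_μ)). In particular, (1/L)·log dim H ≤ (1/n)·∑_{i=1}^n log dim H_i. -/

import Mathlib

open Matrix
open scoped ComplexOrder

noncomputable section

/-- A density operator: positive semidefinite with unit trace. -/
def IsDensity {n : Type*} [Fintype n] (ρ : Matrix n n ℂ) : Prop :=
  ρ.PosSemidef ∧ ρ.trace = 1

/-- A pure state: a density operator that is a (rank-one) projection. -/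
def IsPure {n : Type*} [Fintype n] (ρ : Matrix n n ℂ) : Prop :=
  IsDensity ρ ∧ ρ * ρ = ρ

/-- A quantum channel (CPTP map), characterized by a Kraus representation. -/
def IsCPTP {n m : Type*} [Fintype n] [DecidableEq n] [Fintype m]
    (E : Matrix n n ℂ →ₗ[ℂ] Matrix m m ℂ) : Prop :=
  ∃ (N : ℕ) (K : Fin N → Matrix m n ℂ),
    (∀ ρ, E ρ = ∑ a, K a * ρ * (K a)ᴴ) ∧ ∑ a, (K a)ᴴ * K a = 1

/-- The von Neumann entropy `H(ρ) = -Tr[ρ log ρ]`, via the eigenvalues. -/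
def vnEntropy {n : Type*} [Fintype n] [DecidableEq n] (ρ : Matrix n n ℂ) : ℝ :=
  if h : ρ.IsHermitian then ∑ i, Real.negMulLog (h.eigenvalues i) else 0

/-- The matrix (spectral) logarithm of a Hermitian matrix. -/
def matLog {n : Type*} [Fintype n] [DecidableEq n] (ρ : Matrix n n ℂ) : Matrix n n ℂ :=
  if h : ρ.IsHermitian then
    (h.eigenvectorUnitary : Matrix n n ℂ) *
      diagonal (fun i => (Real.log (h.eigenvalues i) : ℂ)) *
      star (h.eigenvectorUnitary : Matrix n n ℂ)
  else 0

/-- The quantum relative entropy `D(ρ‖σ) = Tr[ρ (log ρ - log σ)]`. -/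
def relEntropy {n : Type*} [Fintype n] [DecidableEq n] (ρ σ : Matrix n n ℂ) : ℝ :=
  ((ρ * (matLog ρ - matLog σ)).trace).re
variable {nn : ℕ} {d : Fin nn → Type} [∀ i, Fintype (d i)] [∀ i, DecidableEq (d i)]
variable {H : Type} [Fintype H] [DecidableEq H]

/-- Combine an assignment on a subset `X` of shares with one on its complement. -/
def mergeFun (X : Finset (Fin nn)) (f : (i : {i // i ∈ X}) → d i)
    (z : (i : {i // i ∉ X}) → d i) : (i : Fin nn) → d i :=
  fun i => if h : i ∈ X then f ⟨i, h⟩ else z ⟨i, h⟩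

/-- Partial trace onto the subsystem given by the subset `X` of shares
(tracing out the shares in the complement of `X`). -/
def ptraceSubset (X : Finset (Fin nn))
    (M : Matrix ((i : Fin nn) → d i) ((i : Fin nn) → d i) ℂ) :
    Matrix ((i : {i // i ∈ X}) → d i) ((i : {i // i ∈ X}) → d i) ℂ :=
  fun f g => ∑ z : (i : {i // i ∉ X}) → d i, M (mergeFun X f z) (mergeFun X g z)

/-- A subset `X` of shares is qualified: the reduced channel `W_X` is reversible on all
density operators, i.e. the original state can be perfectly recovered from `X`. -/
def Qualified (W : Matrix H H ℂ →ₗ[ℂ] Matrix ((i : Fin nn) → d i) ((i : Fin nn) → d i) ℂ)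
    (X : Finset (Fin nn)) : Prop :=
  ∃ R : Matrix ((i : {i // i ∈ X}) → d i) ((i : {i // i ∈ X}) → d i) ℂ →ₗ[ℂ] Matrix H H ℂ,
    IsCPTP R ∧ ∀ ρ : Matrix H H ℂ, IsDensity ρ → R (ptraceSubset X (W ρ)) = ρ

/-- A subset `X` of shares is forbidden: the reduced channel `W_X` is vanishing
(constant) on all density operators, i.e. `X` has no information on the state. -/
def Forbidden (W : Matrix H H ℂ →ₗ[ℂ] Matrix ((i : Fin nn) → d i) ((i : Fin nn) → d i) ℂ)
    (X : Finset (Fin nn)) : Prop :=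
  ∃ ρ₀, IsDensity ρ₀ ∧ ∀ ρ : Matrix H H ℂ, IsDensity ρ → ptraceSubset X (W ρ) = ρ₀

/-- A `(k, L, n)`-threshold ramp quantum secret sharing scheme: a channel from states
on `H` into the `n`-share system such that a subset `X` is qualified iff `|X| ≥ k` and
forbidden iff `|X| ≤ k - L`. -/
def IsRampQSS (k L : ℕ)
    (W : Matrix H H ℂ →ₗ[ℂ] Matrix ((i : Fin nn) → d i) ((i : Fin nn) → d i) ℂ) : Prop :=
  IsCPTP W ∧
    (∀ X : Finset (Fin nn), Qualified W X ↔ k ≤ X.card) ∧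
    (∀ X : Finset (Fin nn), Forbidden W X ↔ X.card ≤ k - L)

/-!
Let `X` have size `L` and take a disjoint `Y` of size `k - L`, so that `X ∪ Y` is qualified and `Y`
is forbidden. Dilate the encoding by a Stinespring isometry and let the environment `E` also hold
the shares outside `X ∪ Y`. As `X ∪ Y` can recover the input, `E` is uncorrelated with it, and so
is the forbidden set `Y`. For a purified input of entropy `H(σ)` with reference `R`, the complements
of `XY` and `XE` are `RE` and `RY`, hence `H(XY) = H(σ) + H(E)` and `H(XE) = H(σ) + H(Y)`.
Subadditivity bounds these by `H(X) + H(Y)` and `H(X) + H(E)`, and adding the two gives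
`H(σ) ≤ H(X) ≤ ∑ i ∈ X, H(W_i(σ))`. Average over all `X` of size `L`; the maximally mixed state
yields the bound on dimensions.
-/

open scoped Kronecker

section Density

variable {n m : Type*} [Fintype n] [Fintype m] {ρ : Matrix n n ℂ}

theorem IsDensity.posSemidef (h : IsDensity ρ) : ρ.PosSemidef :=
  h.1

theorem IsDensity.isHermitian (h : IsDensity ρ) : ρ.IsHermitian :=
  h.posSemidef.isHermitian

theorem IsDensity.trace_eq_one (h : IsDensity ρ) : ρ.trace = 1 :=
  h.2

theorem IsDensity.nonempty (h : IsDensity ρ) : Nonempty n := by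
  by_contra hempty
  rw [not_nonempty_iff] at hempty
  simpa [Matrix.trace] using h.trace_eq_one

theorem IsDensity.submatrix_equiv (h : IsDensity ρ) (e : m ≃ n) :
    IsDensity (ρ.submatrix e e) :=
  ⟨h.posSemidef.submatrix e, (e.sum_comp fun i => ρ i i).trans h.trace_eq_one⟩

theorem IsDensity.unitary_conj [DecidableEq n] {U : Matrix n n ℂ} (h : IsDensity ρ)
    (hU : U ∈ unitaryGroup n ℂ) : IsDensity (Uᴴ * ρ * U) := by
  refine ⟨h.posSemidef.conjTranspose_mul_mul_same U, ?_⟩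
  rw [trace_mul_comm, ← Matrix.mul_assoc, ← star_eq_conjTranspose, mem_unitaryGroup_iff.1 hU,
    Matrix.one_mul, h.trace_eq_one]

end Density

section Entropy

variable {n m : Type*} [Fintype n] [DecidableEq n] [Fintype m] [DecidableEq m]

theorem vnEntropy_of_isHermitian {ρ : Matrix n n ℂ} (h : ρ.IsHermitian) :
    vnEntropy ρ = ∑ i, Real.negMulLog (h.eigenvalues i) :=
  dif_pos h

theorem vnEntropy_eq_sum_roots_charpoly {ρ : Matrix n n ℂ} (h : ρ.IsHermitian) :
    vnEntropy ρ = (ρ.charpoly.roots.map fun z : ℂ => Real.negMulLog z.re).sum := by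
  simp [vnEntropy_of_isHermitian h, h.roots_charpoly_eq_eigenvalues]

theorem vnEntropy_eq_of_charpoly_eq {ρ : Matrix n n ℂ} {τ : Matrix m m ℂ} (hρ : ρ.IsHermitian)
    (hτ : τ.IsHermitian) (h : ρ.charpoly = τ.charpoly) : vnEntropy ρ = vnEntropy τ := by
  rw [vnEntropy_eq_sum_roots_charpoly hρ, vnEntropy_eq_sum_roots_charpoly hτ, h]

theorem vnEntropy_transpose {ρ : Matrix n n ℂ} (h : ρ.IsHermitian) :
    vnEntropy ρᵀ = vnEntropy ρ :=
  vnEntropy_eq_of_charpoly_eq h.transpose h (charpoly_transpose ρ)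

theorem vnEntropy_submatrix_equiv {ρ : Matrix n n ℂ} (h : ρ.IsHermitian) (e : m ≃ n) :
    vnEntropy (ρ.submatrix e e) = vnEntropy ρ :=
  vnEntropy_eq_of_charpoly_eq (h.submatrix e) h (charpoly_reindex e.symm ρ)

theorem vnEntropy_unitary_conj {ρ U : Matrix n n ℂ} (h : ρ.IsHermitian)
    (hU : U ∈ unitaryGroup n ℂ) : vnEntropy (Uᴴ * ρ * U) = vnEntropy ρ := by
  refine vnEntropy_eq_of_charpoly_eq (isHermitian_conjTranspose_mul_mul U h) h ?_
  rw [charpoly_mul_comm, ← Matrix.mul_assoc, ← star_eq_conjTranspose,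
    mem_unitaryGroup_iff.1 hU, Matrix.one_mul]

theorem vnEntropy_diagonal (v : n → ℝ) :
    vnEntropy (diagonal fun i => (v i : ℂ)) = ∑ i, Real.negMulLog (v i) := by
  have hroots : (diagonal fun i => (v i : ℂ)).charpoly.roots =
      Finset.univ.val.map fun i => (v i : ℂ) := by
    rw [charpoly_diagonal, ← Polynomial.roots_multiset_prod_X_sub_C (Finset.univ.val.map _),
      Multiset.map_map]
    rfl
  rw [vnEntropy_eq_sum_roots_charpoly (isHermitian_diagonal_of_self_adjoint _ (by ext i; simp)),
    hroots]
  simp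

theorem vnEntropy_mul_conjTranspose_self (M : Matrix n m ℂ) :
    vnEntropy (M * Mᴴ) = vnEntropy (Mᴴ * M) := by
  rw [vnEntropy_eq_sum_roots_charpoly (isHermitian_mul_conjTranspose_self M),
    vnEntropy_eq_sum_roots_charpoly (isHermitian_conjTranspose_mul_self M)]
  have hleft : Polynomial.X ^ Fintype.card m * (M * Mᴴ).charpoly ≠ 0 :=
    ((Polynomial.monic_X_pow _).mul (charpoly_monic _)).ne_zero
  have hright : Polynomial.X ^ Fintype.card n * (Mᴴ * M).charpoly ≠ 0 :=
    ((Polynomial.monic_X_pow _).mul (charpoly_monic _)).ne_zero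
  have hroots := congrArg (fun p => (p.roots.map fun z : ℂ => Real.negMulLog z.re).sum)
    (charpoly_mul_comm' M Mᴴ)
  simpa [Polynomial.roots_mul hleft, Polynomial.roots_mul hright, Multiset.map_nsmul,
    Multiset.sum_nsmul] using hroots

theorem exists_mem_unitaryGroup_conj_eq_diagonal {ρ : Matrix n n ℂ} (h : ρ.IsHermitian) :
    ∃ U ∈ unitaryGroup n ℂ, Uᴴ * ρ * U = diagonal fun i => (h.eigenvalues i : ℂ) := by
  refine ⟨h.eigenvectorUnitary, h.eigenvectorUnitary.2, ?_⟩
  have hdiag := h.conjStarAlgAut_star_eigenvectorUnitary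
  rwa [Unitary.conjStarAlgAut_star_apply] at hdiag

theorem sum_normSq_row_of_mem_unitaryGroup {U : Matrix n n ℂ} (hU : U ∈ unitaryGroup n ℂ)
    (i : n) : ∑ k, Complex.normSq (U i k) = 1 := by
  have hii := congrFun₂ (mem_unitaryGroup_iff.1 hU) i i
  simp only [mul_apply, star_apply, RCLike.star_def, Complex.mul_conj, one_apply_eq] at hii
  exact_mod_cast hii

theorem sum_normSq_col_of_mem_unitaryGroup {U : Matrix n n ℂ} (hU : U ∈ unitaryGroup n ℂ)
    (k : n) : ∑ i, Complex.normSq (U i k) = 1 := by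
  simpa using sum_normSq_row_of_mem_unitaryGroup (Unitary.star_mem hU) k

theorem diag_re_eq_sum_normSq_mul {ρ U : Matrix n n ℂ} {v : n → ℝ} (hU : U ∈ unitaryGroup n ℂ)
    (h : Uᴴ * ρ * U = diagonal fun k => (v k : ℂ)) (i : n) :
    (ρ i i).re = ∑ k, Complex.normSq (U i k) * v k := by
  have hρ : ρ = U * (diagonal fun k => (v k : ℂ)) * Uᴴ := by
    rw [← h, ← star_eq_conjTranspose]
    simp only [← Matrix.mul_assoc, mem_unitaryGroup_iff.1 hU, Matrix.one_mul]
    rw [Matrix.mul_assoc, mem_unitaryGroup_iff.1 hU, Matrix.mul_one]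
  have hentry : ρ i i = ∑ k, ((Complex.normSq (U i k) * v k : ℝ) : ℂ) := by
    rw [hρ, mul_apply]
    refine Finset.sum_congr rfl fun k _ => ?_
    rw [mul_diagonal, conjTranspose_apply, mul_right_comm, RCLike.star_def, Complex.mul_conj,
      Complex.ofReal_mul]
  rw [hentry, ← Complex.ofReal_sum, Complex.ofReal_re]

theorem vnEntropy_le_sum_negMulLog_diag {ρ : Matrix n n ℂ} (h : ρ.PosSemidef) :
    vnEntropy ρ ≤ ∑ i, Real.negMulLog (ρ i i).re := by
  obtain ⟨U, hU, hdiag⟩ := exists_mem_unitaryGroup_conj_eq_diagonal h.isHermitian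
  calc vnEntropy ρ = ∑ k, Real.negMulLog (h.isHermitian.eigenvalues k) :=
        vnEntropy_of_isHermitian h.isHermitian
    _ = ∑ k, ∑ i, Complex.normSq (U i k) * Real.negMulLog (h.isHermitian.eigenvalues k) := by
        simp_rw [← Finset.sum_mul, sum_normSq_col_of_mem_unitaryGroup hU, one_mul]
    _ = ∑ i, ∑ k, Complex.normSq (U i k) * Real.negMulLog (h.isHermitian.eigenvalues k) :=
        Finset.sum_comm
    _ ≤ ∑ i, Real.negMulLog (ρ i i).re := by
        refine Finset.sum_le_sum fun i _ => ?_
        rw [diag_re_eq_sum_normSq_mul hU hdiag]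
        exact Real.concaveOn_negMulLog.le_map_sum (fun k _ => Complex.normSq_nonneg _)
          (sum_normSq_row_of_mem_unitaryGroup hU i) fun k _ => h.eigenvalues_nonneg k

theorem IsDensity.sum_eigenvalues {ρ : Matrix n n ℂ} (h : IsDensity ρ) :
    ∑ i, h.isHermitian.eigenvalues i = 1 := by
  have htrace := h.isHermitian.trace_eq_sum_eigenvalues.symm.trans h.trace_eq_one
  simpa using congrArg Complex.re htrace

theorem vnEntropy_inv_card_smul_one [Nonempty n] :
    vnEntropy ((Fintype.card n : ℂ)⁻¹ • (1 : Matrix n n ℂ)) = Real.log (Fintype.card n) := by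
  have hcard : (Fintype.card n : ℝ) ≠ 0 := by simp
  have hdiag : (Fintype.card n : ℂ)⁻¹ • (1 : Matrix n n ℂ) =
      diagonal fun _ => (((Fintype.card n : ℝ)⁻¹ : ℝ) : ℂ) := by
    rw [smul_one_eq_diagonal]
    simp
  rw [hdiag, vnEntropy_diagonal, Finset.sum_const, Finset.card_univ, nsmul_eq_mul, Real.negMulLog,
    Real.log_inv]
  field_simp

theorem IsDensity.vnEntropy_le_log_card {ρ : Matrix n n ℂ} (h : IsDensity ρ) :
    vnEntropy ρ ≤ Real.log (Fintype.card n) := by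
  have := h.nonempty
  have hcard : (0 : ℝ) < Fintype.card n := by exact_mod_cast Fintype.card_pos
  have hjensen := Real.concaveOn_negMulLog.le_map_sum (t := Finset.univ)
    (w := fun _ : n => (Fintype.card n : ℝ)⁻¹) (p := h.isHermitian.eigenvalues)
    (fun _ _ => by positivity) (by simp) (fun k _ => h.posSemidef.eigenvalues_nonneg k)
  simp only [smul_eq_mul, ← Finset.mul_sum, h.sum_eigenvalues, mul_one] at hjensen
  rw [Real.negMulLog, Real.log_inv, neg_mul_neg] at hjensen
  rw [vnEntropy_of_isHermitian h.isHermitian]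
  exact le_of_mul_le_mul_left hjensen (inv_pos.2 hcard)

theorem vnEntropy_kronecker {σ : Matrix n n ℂ} {τ : Matrix m m ℂ} (hσ : IsDensity σ)
    (hτ : IsDensity τ) : vnEntropy (σ ⊗ₖ τ) = vnEntropy σ + vnEntropy τ := by
  obtain ⟨U, hU, hσdiag⟩ := exists_mem_unitaryGroup_conj_eq_diagonal hσ.isHermitian
  obtain ⟨V, hV, hτdiag⟩ := exists_mem_unitaryGroup_conj_eq_diagonal hτ.isHermitian
  have hdiag : (U ⊗ₖ V)ᴴ * (σ ⊗ₖ τ) * (U ⊗ₖ V) = diagonal fun x : n × m =>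
      ((hσ.isHermitian.eigenvalues x.1 * hτ.isHermitian.eigenvalues x.2 : ℝ) : ℂ) := by
    rw [conjTranspose_kronecker, ← mul_kronecker_mul, ← mul_kronecker_mul, hσdiag, hτdiag,
      diagonal_kronecker_diagonal]
    simp only [Complex.ofReal_mul]
  have hστ := (hσ.posSemidef.kronecker hτ.posSemidef).isHermitian
  rw [← vnEntropy_unitary_conj hστ (kronecker_mem_unitary hU hV), hdiag, vnEntropy_diagonal,
    vnEntropy_of_isHermitian hσ.isHermitian, vnEntropy_of_isHermitian hτ.isHermitian,
    Fintype.sum_prod_type]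
  simp only [Real.negMulLog_mul, Finset.sum_add_distrib, ← Finset.mul_sum, ← Finset.sum_mul,
    hσ.sum_eigenvalues, hτ.sum_eigenvalues, one_mul]

end Entropy

section Shannon

theorem negMulLog_le_sub_sub_mul_log {p q : ℝ} (hp : 0 ≤ p) (hq : 0 < q) :
    Real.negMulLog p ≤ q - p - p * Real.log q := by
  have hratio := Real.negMulLog_le_one_sub_self (div_nonneg hp hq.le)
  have hscaled := Real.negMulLog_mul q (p / q)
  rw [mul_div_cancel₀ _ hq.ne'] at hscaled
  have hlog : p / q * Real.negMulLog q = -(p * Real.log q) := by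
    rw [Real.negMulLog]
    field_simp
  have hq_mul : q * (1 - p / q) = q - p := by field_simp
  nlinarith [mul_le_mul_of_nonneg_left hratio hq.le]

theorem sum_negMulLog_le_add_marginals {α β : Type*} [Fintype α] [Fintype β] {p : α × β → ℝ}
    (hp : ∀ x, 0 ≤ p x) (hsum : ∑ x, p x = 1) :
    ∑ x, Real.negMulLog (p x) ≤
      ∑ a, Real.negMulLog (∑ b, p (a, b)) + ∑ b, Real.negMulLog (∑ a, p (a, b)) := by
  set pα : α → ℝ := fun a => ∑ b, p (a, b)
  set pβ : β → ℝ := fun b => ∑ a, p (a, b)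
  have hα : ∀ a b, p (a, b) ≤ pα a := fun a b =>
    Finset.single_le_sum (f := fun b => p (a, b)) (fun b _ => hp (a, b)) (Finset.mem_univ b)
  have hβ : ∀ a b, p (a, b) ≤ pβ b := fun a b =>
    Finset.single_le_sum (f := fun a => p (a, b)) (fun a _ => hp (a, b)) (Finset.mem_univ a)
  have hsumα : ∑ a, pα a = 1 := by rw [← hsum, Fintype.sum_prod_type]
  have hsumβ : ∑ b, pβ b = 1 := by rw [← hsum, Fintype.sum_prod_type_right]
  have hgibbs : ∀ a b, Real.negMulLog (p (a, b)) ≤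
      pα a * pβ b - p (a, b) - p (a, b) * Real.log (pα a) - p (a, b) * Real.log (pβ b) := by
    intro a b
    rcases (hp (a, b)).eq_or_lt with hzero | hpos
    · simpa [← hzero] using mul_nonneg ((hp (a, b)).trans (hα a b)) ((hp (a, b)).trans (hβ a b))
    · have hposα := hpos.trans_le (hα a b)
      have hposβ := hpos.trans_le (hβ a b)
      have := negMulLog_le_sub_sub_mul_log hpos.le (mul_pos hposα hposβ)
      rw [Real.log_mul hposα.ne' hposβ.ne'] at this
      linarith
  calc ∑ x, Real.negMulLog (p x) = ∑ a, ∑ b, Real.negMulLog (p (a, b)) :=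
        Fintype.sum_prod_type _
    _ ≤ ∑ a, ∑ b, (pα a * pβ b - p (a, b) - p (a, b) * Real.log (pα a)
          - p (a, b) * Real.log (pβ b)) :=
        Finset.sum_le_sum fun a _ => Finset.sum_le_sum fun b _ => hgibbs a b
    _ = (∑ a, pα a) * (∑ b, pβ b) - ∑ a, pα a - ∑ a, pα a * Real.log (pα a)
          - ∑ b, pβ b * Real.log (pβ b) := by
        simp only [Finset.sum_sub_distrib, ← Finset.sum_mul_sum]
        rw [Finset.sum_comm (f := fun a b => p (a, b) * Real.log (pβ b))]
        simp only [← Finset.sum_mul, pα, pβ]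
    _ = ∑ a, Real.negMulLog (pα a) + ∑ b, Real.negMulLog (pβ b) := by
        simp only [Real.negMulLog, hsumα, hsumβ, neg_mul, Finset.sum_neg_distrib]
        ring

end Shannon

section PartialTrace

variable {α β : Type*}

/-- The partial trace of an operator on a bipartite system over its right factor, leaving an
operator on the left factor. -/
def partialTraceRight [Fintype β] (ρ : Matrix (α × β) (α × β) ℂ) : Matrix α α ℂ :=
  of fun a a' => ∑ b, ρ (a, b) (a', b)

/-- The partial trace of an operator on a bipartite system over its left factor, leaving an
operator on the right factor. -/
def partialTraceLeft [Fintype α] (ρ : Matrix (α × β) (α × β) ℂ) : Matrix β β ℂ :=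
  of fun b b' => ∑ a, ρ (a, b) (a, b')

theorem posSemidef_partialTraceRight [Fintype β] {ρ : Matrix (α × β) (α × β) ℂ}
    (h : ρ.PosSemidef) : (partialTraceRight ρ).PosSemidef := by
  have hsum : partialTraceRight ρ = ∑ b, ρ.submatrix (·, b) (·, b) := by
    ext a a'
    simp [partialTraceRight, Matrix.sum_apply]
  exact hsum ▸ posSemidef_sum _ fun b _ => h.submatrix _

variable [Fintype α] [Fintype β]

theorem trace_partialTraceRight (ρ : Matrix (α × β) (α × β) ℂ) :
    (partialTraceRight ρ).trace = ρ.trace :=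
  (Fintype.sum_prod_type fun x => ρ x x).symm

theorem isDensity_partialTraceRight {ρ : Matrix (α × β) (α × β) ℂ} (h : IsDensity ρ) :
    IsDensity (partialTraceRight ρ) :=
  ⟨posSemidef_partialTraceRight h.posSemidef, (trace_partialTraceRight ρ).trans h.trace_eq_one⟩

theorem isDensity_partialTraceLeft {ρ : Matrix (α × β) (α × β) ℂ} (h : IsDensity ρ) :
    IsDensity (partialTraceLeft ρ) :=
  isDensity_partialTraceRight (h.submatrix_equiv (Equiv.prodComm β α))

theorem trace_partialTraceLeft (ρ : Matrix (α × β) (α × β) ℂ) :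
    (partialTraceLeft ρ).trace = ρ.trace :=
  (Fintype.sum_prod_type_right fun x => ρ x x).symm

theorem trace_partialTraceRight_mul [DecidableEq β] (ρ : Matrix (α × β) (α × β) ℂ)
    (X : Matrix α α ℂ) :
    (partialTraceRight ρ * X).trace = (ρ * (X ⊗ₖ (1 : Matrix β β ℂ))).trace := by
  simp only [Matrix.trace, diag_apply, mul_apply, partialTraceRight, of_apply, kroneckerMap_apply,
    one_apply, Fintype.sum_prod_type, mul_ite, mul_one, mul_zero, Finset.sum_ite_eq',
    Finset.mem_univ, if_true, Finset.sum_mul]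
  exact Finset.sum_congr rfl fun a _ => Finset.sum_comm

theorem trace_partialTraceLeft_mul [DecidableEq α] (ρ : Matrix (α × β) (α × β) ℂ)
    (X : Matrix β β ℂ) :
    (partialTraceLeft ρ * X).trace = (ρ * ((1 : Matrix α α ℂ) ⊗ₖ X)).trace := by
  simp only [Matrix.trace, diag_apply, mul_apply, partialTraceLeft, of_apply, kroneckerMap_apply,
    one_apply, Fintype.sum_prod_type_right, ite_mul, one_mul, zero_mul, mul_ite, mul_zero,
    Finset.sum_ite_eq', Finset.mem_univ, if_true, Finset.sum_mul]
  exact Finset.sum_congr rfl fun a _ => Finset.sum_comm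

theorem partialTraceRight_kronecker_conj [DecidableEq β] (ρ : Matrix (α × β) (α × β) ℂ)
    (U : Matrix α α ℂ) {V : Matrix β β ℂ} (hV : V ∈ unitaryGroup β ℂ) :
    partialTraceRight ((U ⊗ₖ V)ᴴ * ρ * (U ⊗ₖ V)) = Uᴴ * partialTraceRight ρ * U := by
  refine ext_iff_trace_mul_right.2 fun X => ?_
  calc (partialTraceRight ((U ⊗ₖ V)ᴴ * ρ * (U ⊗ₖ V)) * X).trace
      = ((U ⊗ₖ V)ᴴ * (ρ * ((U ⊗ₖ V) * (X ⊗ₖ 1)))).trace := by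
        rw [trace_partialTraceRight_mul]
        simp only [Matrix.mul_assoc]
    _ = (ρ * ((U * X * Uᴴ) ⊗ₖ (V * 1 * Vᴴ))).trace := by
        rw [trace_mul_comm, conjTranspose_kronecker, Matrix.mul_assoc, ← mul_kronecker_mul,
          ← mul_kronecker_mul]
    _ = (Uᴴ * partialTraceRight ρ * U * X).trace := by
        rw [Matrix.mul_one, ← star_eq_conjTranspose V, mem_unitaryGroup_iff.1 hV,
          ← trace_partialTraceRight_mul, ← Matrix.mul_assoc, trace_mul_comm]
        simp only [Matrix.mul_assoc]

theorem partialTraceLeft_kronecker_conj [DecidableEq α] (ρ : Matrix (α × β) (α × β) ℂ)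
    {U : Matrix α α ℂ} (hU : U ∈ unitaryGroup α ℂ) (V : Matrix β β ℂ) :
    partialTraceLeft ((U ⊗ₖ V)ᴴ * ρ * (U ⊗ₖ V)) = Vᴴ * partialTraceLeft ρ * V := by
  refine ext_iff_trace_mul_right.2 fun X => ?_
  calc (partialTraceLeft ((U ⊗ₖ V)ᴴ * ρ * (U ⊗ₖ V)) * X).trace
      = ((U ⊗ₖ V)ᴴ * (ρ * ((U ⊗ₖ V) * (1 ⊗ₖ X)))).trace := by
        rw [trace_partialTraceLeft_mul]
        simp only [Matrix.mul_assoc]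
    _ = (ρ * ((U * 1 * Uᴴ) ⊗ₖ (V * X * Vᴴ))).trace := by
        rw [trace_mul_comm, conjTranspose_kronecker, Matrix.mul_assoc, ← mul_kronecker_mul,
          ← mul_kronecker_mul]
    _ = (Vᴴ * partialTraceLeft ρ * V * X).trace := by
        rw [Matrix.mul_one, ← star_eq_conjTranspose U, mem_unitaryGroup_iff.1 hU,
          ← trace_partialTraceLeft_mul, ← Matrix.mul_assoc, trace_mul_comm]
        simp only [Matrix.mul_assoc]

theorem IsDensity.sum_negMulLog_diag_le {ρ : Matrix (α × β) (α × β) ℂ} (h : IsDensity ρ) :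
    ∑ x, Real.negMulLog (ρ x x).re ≤
      ∑ a, Real.negMulLog (partialTraceRight ρ a a).re +
        ∑ b, Real.negMulLog (partialTraceLeft ρ b b).re := by
  have hsum : ∑ x, (ρ x x).re = 1 := by
    rw [← Complex.re_sum]
    exact congrArg Complex.re h.trace_eq_one
  simpa only [partialTraceRight, partialTraceLeft, of_apply, Complex.re_sum] using
    sum_negMulLog_le_add_marginals (fun x => (Complex.le_def.1 h.posSemidef.diag_nonneg).1) hsum

-- Conjugating by the product of unitaries that diagonalize the two marginals reduces the claim to
-- the classical inequality for the diagonal.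
theorem IsDensity.vnEntropy_le_add_partialTrace [DecidableEq α] [DecidableEq β]
    {ρ : Matrix (α × β) (α × β) ℂ} (h : IsDensity ρ) :
    vnEntropy ρ ≤ vnEntropy (partialTraceRight ρ) + vnEntropy (partialTraceLeft ρ) := by
  have hα := (isDensity_partialTraceRight h).isHermitian
  have hβ := (isDensity_partialTraceLeft h).isHermitian
  obtain ⟨U, hU, hUdiag⟩ := exists_mem_unitaryGroup_conj_eq_diagonal hα
  obtain ⟨V, hV, hVdiag⟩ := exists_mem_unitaryGroup_conj_eq_diagonal hβ
  have hUV := kronecker_mem_unitary hU hV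
  have hconj := h.unitary_conj hUV
  calc vnEntropy ρ = vnEntropy ((U ⊗ₖ V)ᴴ * ρ * (U ⊗ₖ V)) :=
        (vnEntropy_unitary_conj h.isHermitian hUV).symm
    _ ≤ _ := (vnEntropy_le_sum_negMulLog_diag hconj.posSemidef).trans hconj.sum_negMulLog_diag_le
    _ = vnEntropy (partialTraceRight ρ) + vnEntropy (partialTraceLeft ρ) := by
        rw [partialTraceRight_kronecker_conj ρ U hV, partialTraceLeft_kronecker_conj ρ hU V,
          hUdiag, hVdiag, vnEntropy_of_isHermitian hα, vnEntropy_of_isHermitian hβ]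
        simp only [diagonal_apply_eq, Complex.ofReal_re]

end PartialTrace

section DensitySpan

open scoped MatrixOrder Matrix.Norms.L2Operator

theorem span_posSemidef_eq_top {n : Type*} [Finite n] :
    Submodule.span ℂ {A : Matrix n n ℂ | A.PosSemidef} = ⊤ := by
  classical
  have := Fintype.ofFinite n
  simp only [← nonneg_iff_posSemidef]
  exact CStarAlgebra.span_nonneg

variable {n : Type*} [Fintype n]

theorem exists_eq_mul_conjTranspose_of_posSemidef {A : Matrix n n ℂ} (h : A.PosSemidef) :
    ∃ D : Matrix n n ℂ, A = D * Dᴴ := by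
  classical exact CStarAlgebra.nonneg_iff_eq_mul_star_self.1 h.nonneg

theorem isDensity_inv_trace_smul {A : Matrix n n ℂ} (h : A.PosSemidef) (htrace : A.trace ≠ 0) :
    IsDensity (A.trace⁻¹ • A) :=
  ⟨h.smul (inv_nonneg.2 h.trace_nonneg), by
    rw [trace_smul, smul_eq_mul, inv_mul_cancel₀ htrace]⟩

theorem linearMap_ext_isDensity {F : Type*} [AddCommMonoid F] [Module ℂ F]
    {f g : Matrix n n ℂ →ₗ[ℂ] F} (h : ∀ ρ, IsDensity ρ → f ρ = g ρ) : f = g := by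
  refine LinearMap.ext_on span_posSemidef_eq_top fun A (hA : A.PosSemidef) => ?_
  rcases eq_or_ne A.trace 0 with htrace | htrace
  · rw [hA.trace_eq_zero_iff.1 htrace, map_zero, map_zero]
  · rw [← smul_inv_smul₀ htrace A, map_smul f, map_smul g,
      h _ (isDensity_inv_trace_smul hA htrace)]

theorem apply_eq_trace_smul_of_const_on_isDensity {F : Type*} [AddCommMonoid F] [Module ℂ F]
    {f : Matrix n n ℂ →ₗ[ℂ] F} {y : F} (h : ∀ ρ, IsDensity ρ → f ρ = y)
    (A : Matrix n n ℂ) : f A = A.trace • y := by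
  have hf : f = (traceLinearMap n ℂ ℂ).smulRight y := linearMap_ext_isDensity fun ρ hρ => by
    simp [h ρ hρ, hρ.trace_eq_one]
  simp [hf]

end DensitySpan

section Purification

variable {n A B E : Type*} [Fintype n] [DecidableEq n]

theorem mul_single_mul_conjTranspose_apply (M : Matrix A n ℂ) (r r' : n) (a a' : A) :
    (M * (single r r' 1 : Matrix n n ℂ) * Mᴴ) a a' = M a r * star (M a' r') := by
  simp [mul_apply, single_apply, ite_and]

-- With `σ = D * Dᴴ`, the pure state with amplitudes `(V * D) (a, b) r` has marginal
-- `(Dᴴ * D)ᵀ ⊗ₖ τ` on `n × B` and marginal `V * σ * Vᴴ` traced over `B` on `A`.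
theorem vnEntropy_partialTraceRight_of_partialTraceLeft_const [Fintype A] [DecidableEq A]
    [Fintype B] [DecidableEq B] {V : Matrix (A × B) n ℂ}
    {τ : Matrix B B ℂ} {σ : Matrix n n ℂ} (hτ : IsDensity τ)
    (hV : ∀ T : Matrix n n ℂ, partialTraceLeft (V * T * Vᴴ) = T.trace • τ) (hσ : IsDensity σ) :
    vnEntropy (partialTraceRight (V * σ * Vᴴ)) = vnEntropy σ + vnEntropy τ := by
  obtain ⟨D, rfl⟩ := exists_eq_mul_conjTranspose_of_posSemidef hσ.posSemidef
  have hDD : IsDensity (Dᴴ * D)ᵀ :=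
    ⟨(posSemidef_conjTranspose_mul_self D).transpose, by
      rw [trace_transpose, trace_mul_comm, hσ.trace_eq_one]⟩
  set W := V * D with hW
  have hassoc : ∀ T : Matrix n n ℂ, V * (D * T * Dᴴ) * Vᴴ = W * T * Wᴴ := fun T => by
    simp only [hW, conjTranspose_mul, Matrix.mul_assoc]
  let M : Matrix (n × B) A ℂ := of fun x a => W (a, x.2) x.1
  have hMM : M * Mᴴ = (Dᴴ * D)ᵀ ⊗ₖ τ := by
    ext ⟨r, b⟩ ⟨r', b'⟩
    have hentry := congrFun₂ (hV (D * single r r' 1 * Dᴴ)) b b'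
    rw [hassoc, trace_mul_comm, ← Matrix.mul_assoc, trace_mul_single, MulOpposite.op_one,
      one_smul] at hentry
    simp only [partialTraceLeft, of_apply, mul_single_mul_conjTranspose_apply] at hentry
    exact hentry
  have hMM' : (Mᴴ * M)ᵀ = partialTraceRight (W * Wᴴ) := by
    ext a a'
    simp only [M, partialTraceRight, transpose_apply, mul_apply, conjTranspose_apply,
      of_apply, Fintype.sum_prod_type_right, mul_comm (star _)]
  have hσW : V * (D * Dᴴ) * Vᴴ = W * Wᴴ := by simpa only [Matrix.mul_one] using hassoc 1
  calc vnEntropy (partialTraceRight (V * (D * Dᴴ) * Vᴴ)) = vnEntropy (M * Mᴴ) := by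
        rw [hσW, ← hMM', vnEntropy_transpose (isHermitian_conjTranspose_mul_self M),
          vnEntropy_mul_conjTranspose_self]
    _ = vnEntropy (D * Dᴴ) + vnEntropy τ := by
        rw [hMM, vnEntropy_kronecker hDD hτ,
          vnEntropy_transpose (isHermitian_conjTranspose_mul_self D),
          vnEntropy_mul_conjTranspose_self]

/-- The rearrangement of the factors of a tripartite system that exchanges the last two. -/
def prodRightCommEquiv (A B E : Type*) : (A × E) × B ≃ (A × B) × E where
  toFun x := ((x.1.1, x.2), x.1.2)
  invFun x := ((x.1.1, x.2), x.1.2)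

theorem partialTraceLeft_submatrix_prodRightCommEquiv [Fintype A] [Fintype E]
    (ρ : Matrix ((A × B) × E) ((A × B) × E) ℂ) :
    partialTraceLeft (ρ.submatrix (prodRightCommEquiv A B E) (prodRightCommEquiv A B E)) =
      partialTraceLeft (partialTraceRight ρ) := by
  ext b b'
  exact Fintype.sum_prod_type _

theorem partialTraceRight_partialTraceRight_submatrix_prodRightCommEquiv [Fintype B] [Fintype E]
    (ρ : Matrix ((A × B) × E) ((A × B) × E) ℂ) :
    partialTraceRight (partialTraceRight
        (ρ.submatrix (prodRightCommEquiv A B E) (prodRightCommEquiv A B E))) =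
      partialTraceRight (partialTraceRight ρ) := by
  ext a a'
  exact Finset.sum_comm

-- Subadditivity gives `H(σ) + H(η) ≤ H(A) + H(β)` on `A × B` and, symmetrically,
-- `H(σ) + H(β) ≤ H(A) + H(η)` on `A × E`; in the sum of the two, `H(β)` and `H(η)` cancel.
theorem vnEntropy_le_of_partialTrace_const [Fintype A] [DecidableEq A] [Fintype B] [Fintype E]
    {V : Matrix ((A × B) × E) n ℂ} {β : Matrix B B ℂ} {η : Matrix E E ℂ} {σ : Matrix n n ℂ}
    (hβ : IsDensity β)
    (hB : ∀ T : Matrix n n ℂ, partialTraceLeft (partialTraceRight (V * T * Vᴴ)) = T.trace • β)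
    (hE : ∀ T : Matrix n n ℂ, partialTraceLeft (V * T * Vᴴ) = T.trace • η) (hσ : IsDensity σ) :
    vnEntropy σ ≤ vnEntropy (partialTraceRight (partialTraceRight (V * σ * Vᴴ))) := by
  classical
  set e := prodRightCommEquiv A B E
  set ρ := V * σ * Vᴴ
  have hBσ : partialTraceLeft (partialTraceRight ρ) = β := by rw [hB, hσ.trace_eq_one, one_smul]
  have hEσ : partialTraceLeft ρ = η := by rw [hE, hσ.trace_eq_one, one_smul]
  have hρ : IsDensity ρ := by
    refine ⟨hσ.posSemidef.mul_mul_conjTranspose_same V, ?_⟩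
    rw [← trace_partialTraceRight, ← trace_partialTraceLeft, hBσ, hβ.trace_eq_one]
  have hη : IsDensity η := hEσ ▸ isDensity_partialTraceLeft hρ
  have hAB : vnEntropy (partialTraceRight ρ) = vnEntropy σ + vnEntropy η :=
    vnEntropy_partialTraceRight_of_partialTraceLeft_const hη hE hσ
  have hAE : vnEntropy (partialTraceRight (ρ.submatrix e e)) = vnEntropy σ + vnEntropy β :=
    vnEntropy_partialTraceRight_of_partialTraceLeft_const (V := V.submatrix e id) hβ
      (fun T => (partialTraceLeft_submatrix_prodRightCommEquiv (V * T * Vᴴ)).trans (hB T)) hσ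
  have hAB_le := (isDensity_partialTraceRight hρ).vnEntropy_le_add_partialTrace
  have hAE_le := (isDensity_partialTraceRight (hρ.submatrix_equiv e)).vnEntropy_le_add_partialTrace
  rw [partialTraceRight_partialTraceRight_submatrix_prodRightCommEquiv] at hAE_le
  have hE' : partialTraceLeft (partialTraceRight (ρ.submatrix e e)) = η := by
    rw [← partialTraceLeft_submatrix_prodRightCommEquiv]
    exact hEσ
  rw [hBσ] at hAB_le
  rw [hE'] at hAE_le
  linarith

end Purification

section InformationDisturbance

variable {n m J E : Type*} [Fintype n] [Fintype J]

open scoped MatrixOrder in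
theorem eq_zero_of_sum_mul_conjTranspose_eq_zero [Finite m] {D : J → Matrix m n ℂ}
    (h : ∑ j, D j * (D j)ᴴ = 0) (j : J) : D j = 0 := by
  have := Fintype.ofFinite m
  have hnonneg : ∀ j ∈ Finset.univ, 0 ≤ D j * (D j)ᴴ := fun j _ =>
    (posSemidef_self_mul_conjTranspose (D j)).nonneg
  exact self_mul_conjTranspose_eq_zero.1
    ((Finset.sum_eq_zero_iff_of_nonneg hnonneg).1 h j (Finset.mem_univ j))

theorem commute_of_sum_conj_eq_self {F : J → Matrix n n ℂ}
    (hF : ∀ T : Matrix n n ℂ, ∑ j, F j * T * (F j)ᴴ = T) (j : J) (T : Matrix n n ℂ) :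
    Commute T (F j) := by
  classical
  have hexpand : ∀ j, (T * F j - F j * T) * (T * F j - F j * T)ᴴ =
      T * (F j * 1 * (F j)ᴴ) * Tᴴ - T * (F j * Tᴴ * (F j)ᴴ) - F j * T * (F j)ᴴ * Tᴴ +
        F j * (T * Tᴴ) * (F j)ᴴ := fun j => by
    rw [conjTranspose_sub, conjTranspose_mul, conjTranspose_mul]
    noncomm_ring
  have hsum : ∑ j, (T * F j - F j * T) * (T * F j - F j * T)ᴴ = 0 := by
    simp only [hexpand, Finset.sum_add_distrib, Finset.sum_sub_distrib, ← Finset.mul_sum,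
      ← Finset.sum_mul, hF]
    rw [Matrix.mul_one]
    abel
  exact sub_eq_zero.1 (eq_zero_of_sum_mul_conjTranspose_eq_zero hsum j)

theorem exists_eq_smul_one_of_sum_conj_eq_self [DecidableEq n] {F : J → Matrix n n ℂ}
    (hF : ∀ T : Matrix n n ℂ, ∑ j, F j * T * (F j)ᴴ = T) (j : J) : ∃ c : ℂ, F j = c • 1 := by
  obtain ⟨c, hc⟩ := mem_range_scalar_iff_commute_single'.2 fun _ _ =>
    commute_of_sum_conj_eq_self hF j _
  exact ⟨c, by rw [← hc, scalar_apply, smul_one_eq_diagonal]⟩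

/-- The Stinespring operator of a Kraus family: its blocks, indexed by the environment `E`, are the
Kraus operators. -/
def stinespring (K : E → Matrix m n ℂ) : Matrix (m × E) n ℂ :=
  of fun x r => K x.2 x.1 r

theorem partialTraceRight_stinespring_conj [Fintype E] (K : E → Matrix m n ℂ)
    (T : Matrix n n ℂ) :
    partialTraceRight (stinespring K * T * (stinespring K)ᴴ) = ∑ e, K e * T * (K e)ᴴ := by
  ext p p'
  rw [Matrix.sum_apply]
  rfl

theorem partialTraceLeft_stinespring_conj_apply [Fintype m] (K : E → Matrix m n ℂ)
    (T : Matrix n n ℂ) (e e' : E) : partialTraceLeft (stinespring K * T * (stinespring K)ᴴ) e e' =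
      (K e * T * (K e')ᴴ).trace :=
  rfl

-- Composing the Kraus operators `K` with those of `R` gives Kraus operators of the identity, hence
-- scalars; this makes every `(K e')ᴴ * K e` a scalar too.
theorem exists_partialTraceLeft_stinespring_conj_eq [Fintype m] [DecidableEq m] [Fintype E]
    {K : E → Matrix m n ℂ} {R : Matrix m m ℂ →ₗ[ℂ] Matrix n n ℂ} (hR : IsCPTP R)
    (hRK : ∀ T : Matrix n n ℂ, R (∑ e, K e * T * (K e)ᴴ) = T) :
    ∃ η : Matrix E E ℂ, ∀ T : Matrix n n ℂ,
      partialTraceLeft (stinespring K * T * (stinespring K)ᴴ) = T.trace • η := by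
  classical
  obtain ⟨N, M, hRM, hM⟩ := hR
  have hMK : ∀ T : Matrix n n ℂ,
      ∑ x : Fin N × E, M x.1 * K x.2 * T * (M x.1 * K x.2)ᴴ = T := fun T => by
    conv_rhs => rw [← hRK T, hRM]
    simp only [Fintype.sum_prod_type, conjTranspose_mul, Matrix.mul_sum, Matrix.sum_mul,
      Matrix.mul_assoc]
  choose c hc using exists_eq_smul_one_of_sum_conj_eq_self hMK
  have hKK : ∀ e e', (K e')ᴴ * K e = (∑ a, star (c (a, e')) * c (a, e)) • 1 := fun e e' =>
    calc (K e')ᴴ * K e = (K e')ᴴ * (∑ a, (M a)ᴴ * M a) * K e := by rw [hM, Matrix.mul_one]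
      _ = ∑ a, (M a * K e')ᴴ * (M a * K e) := by
        simp only [conjTranspose_mul, Matrix.mul_sum, Matrix.sum_mul, Matrix.mul_assoc]
      _ = (∑ a, star (c (a, e')) * c (a, e)) • 1 := by
        rw [Finset.sum_smul]
        refine Finset.sum_congr rfl fun a _ => ?_
        rw [hc (a, e'), hc (a, e), conjTranspose_smul, conjTranspose_one, smul_mul_smul_comm,
          Matrix.mul_one]
  refine ⟨of fun e e' => ∑ a, star (c (a, e')) * c (a, e), fun T => ?_⟩
  ext e e'
  rw [partialTraceLeft_stinespring_conj_apply, trace_mul_comm, ← Matrix.mul_assoc, hKK,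
    smul_one_mul, trace_smul, Matrix.smul_apply, of_apply, smul_eq_mul, smul_eq_mul, mul_comm]

end InformationDisturbance

section Shares

/-- Assignments on the disjoint union `r` of the predicates `p` and `q` are pairs of an assignment
on `p` and one on `q`. -/
def piSubtypeDisjUnionEquiv {ι : Type*} (d : ι → Type*) {p q r : ι → Prop} [DecidablePred p]
    (hr : ∀ i, r i ↔ p i ∨ q i) (hpq : ∀ i, p i → ¬q i) :
    ((∀ i : {i // p i}, d i) × (∀ i : {i // q i}, d i)) ≃ (∀ i : {i // r i}, d i) where
  toFun x i := if h : p i then x.1 ⟨i, h⟩ else x.2 ⟨i, ((hr i).1 i.2).resolve_left h⟩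
  invFun f := (fun i => f ⟨i, (hr i).2 (.inl i.2)⟩, fun i => f ⟨i, (hr i).2 (.inr i.2)⟩)
  left_inv x := by
    refine Prod.ext (funext fun i => dif_pos i.2) (funext fun i => dif_neg fun hi => ?_)
    exact hpq i hi i.2
  right_inv f := funext fun i => by by_cases h : p i <;> simp [h]

variable {X Y : Finset (Fin nn)}

/-- Assignments on `X ∪ Y`, split into the parts on `X` and on `Y`. -/
def shareUnionEquiv (d : Fin nn → Type) (hXY : Disjoint X Y) :
    ((∀ i : {i // i ∈ X}, d i) × (∀ i : {i // i ∈ Y}, d i)) ≃ (∀ i : {i // i ∈ X ∪ Y}, d i) :=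
  piSubtypeDisjUnionEquiv d (fun _ => Finset.mem_union) fun _ => (Finset.disjoint_left.1 hXY ·)

/-- Assignments off `X`, split into the parts on `Y` and off `X ∪ Y`. -/
def shareComplEquivLeft (d : Fin nn → Type) (hXY : Disjoint X Y) :
    ((∀ i : {i // i ∈ Y}, d i) × (∀ i : {i // i ∉ X ∪ Y}, d i)) ≃ (∀ i : {i // i ∉ X}, d i) :=
  piSubtypeDisjUnionEquiv d
    (fun i => by
      have hi : i ∈ X → i ∉ Y := fun h => Finset.disjoint_left.1 hXY h
      rw [Finset.mem_union]
      tauto)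
    fun _ hi hi' => hi' (Finset.mem_union_right _ hi)

/-- Assignments off `Y`, split into the parts on `X` and off `X ∪ Y`. -/
def shareComplEquivRight (d : Fin nn → Type) (hXY : Disjoint X Y) :
    ((∀ i : {i // i ∈ X}, d i) × (∀ i : {i // i ∉ X ∪ Y}, d i)) ≃ (∀ i : {i // i ∉ Y}, d i) :=
  piSubtypeDisjUnionEquiv d
    (fun i => by
      have hi : i ∈ X → i ∉ Y := fun h => Finset.disjoint_left.1 hXY h
      rw [Finset.mem_union]
      tauto)
    fun _ hi hi' => hi' (Finset.mem_union_left _ hi)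

omit [∀ i, Fintype (d i)] [∀ i, DecidableEq (d i)] in
theorem mergeFun_shareComplEquivLeft (hXY : Disjoint X Y) (x : ∀ i : {i // i ∈ X}, d i)
    (y : ∀ i : {i // i ∈ Y}, d i) (z : ∀ i : {i // i ∉ X ∪ Y}, d i) :
    mergeFun X x (shareComplEquivLeft d hXY (y, z)) =
      mergeFun (X ∪ Y) (shareUnionEquiv d hXY (x, y)) z := by
  funext i
  by_cases hX : i ∈ X <;> by_cases hY : i ∈ Y <;>
    simp [mergeFun, shareComplEquivLeft, shareUnionEquiv, piSubtypeDisjUnionEquiv, hX, hY]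

omit [∀ i, Fintype (d i)] [∀ i, DecidableEq (d i)] in
theorem mergeFun_shareComplEquivRight (hXY : Disjoint X Y) (x : ∀ i : {i // i ∈ X}, d i)
    (y : ∀ i : {i // i ∈ Y}, d i) (z : ∀ i : {i // i ∉ X ∪ Y}, d i) :
    mergeFun Y y (shareComplEquivRight d hXY (x, z)) =
      mergeFun (X ∪ Y) (shareUnionEquiv d hXY (x, y)) z := by
  funext i
  have hi : i ∈ X → i ∉ Y := fun h => Finset.disjoint_left.1 hXY h
  by_cases hX : i ∈ X <;> by_cases hY : i ∈ Y <;>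
    simp_all [mergeFun, shareComplEquivRight, shareUnionEquiv, piSubtypeDisjUnionEquiv]

omit [∀ i, DecidableEq (d i)] in
theorem partialTraceRight_ptraceSubset_union (hXY : Disjoint X Y)
    (M : Matrix (∀ i, d i) (∀ i, d i) ℂ) :
    partialTraceRight ((ptraceSubset (X ∪ Y) M).submatrix (shareUnionEquiv d hXY)
      (shareUnionEquiv d hXY)) = ptraceSubset X M := by
  ext x x'
  simp only [partialTraceRight, of_apply, submatrix_apply, ptraceSubset,
    ← (shareComplEquivLeft d hXY).sum_comp, Fintype.sum_prod_type, mergeFun_shareComplEquivLeft]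

omit [∀ i, DecidableEq (d i)] in
theorem partialTraceLeft_ptraceSubset_union (hXY : Disjoint X Y)
    (M : Matrix (∀ i, d i) (∀ i, d i) ℂ) :
    partialTraceLeft ((ptraceSubset (X ∪ Y) M).submatrix (shareUnionEquiv d hXY)
      (shareUnionEquiv d hXY)) = ptraceSubset Y M := by
  ext y y'
  simp only [partialTraceLeft, of_apply, submatrix_apply, ptraceSubset,
    ← (shareComplEquivRight d hXY).sum_comp, Fintype.sum_prod_type, mergeFun_shareComplEquivRight]

omit [∀ i, DecidableEq (d i)] in
theorem ptraceSubset_eq_sum_submatrix (X : Finset (Fin nn)) (M : Matrix (∀ i, d i) (∀ i, d i) ℂ) :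
    ptraceSubset X M = ∑ z, M.submatrix (mergeFun X · z) (mergeFun X · z) := by
  ext f g
  rw [Matrix.sum_apply]
  rfl

/-- The partial trace onto the shares in `X` as a linear map. -/
def ptraceSubsetLinearMap (X : Finset (Fin nn)) : Matrix (∀ i, d i) (∀ i, d i) ℂ →ₗ[ℂ]
    Matrix (∀ i : {i // i ∈ X}, d i) (∀ i : {i // i ∈ X}, d i) ℂ where
  toFun := ptraceSubset X
  map_add' M N := by
    ext f g
    simp [ptraceSubset, Finset.sum_add_distrib]
  map_smul' c M := by
    ext f g
    simp [ptraceSubset, Finset.mul_sum]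

omit [∀ i, DecidableEq (d i)] in
theorem trace_ptraceSubset (X : Finset (Fin nn)) (M : Matrix (∀ i, d i) (∀ i, d i) ℂ) :
    (ptraceSubset X M).trace = M.trace := by
  rw [Matrix.trace, Matrix.trace,
    ← (Equiv.piEquivPiSubtypeProd (· ∈ X) d).symm.sum_comp, Fintype.sum_prod_type]
  rfl

omit [∀ i, DecidableEq (d i)] in
theorem isDensity_ptraceSubset (X : Finset (Fin nn)) {M : Matrix (∀ i, d i) (∀ i, d i) ℂ}
    (hM : IsDensity M) : IsDensity (ptraceSubset X M) := by
  refine ⟨?_, (trace_ptraceSubset X M).trans hM.trace_eq_one⟩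
  rw [ptraceSubset_eq_sum_submatrix]
  exact posSemidef_sum _ fun z _ => hM.posSemidef.submatrix _

theorem vnEntropy_ptraceSubset_union_le (hXY : Disjoint X Y)
    {M : Matrix (∀ i, d i) (∀ i, d i) ℂ} (hM : IsDensity M) :
    vnEntropy (ptraceSubset (X ∪ Y) M) ≤
      vnEntropy (ptraceSubset X M) + vnEntropy (ptraceSubset Y M) := by
  have hunion := isDensity_ptraceSubset (X ∪ Y) hM
  rw [← vnEntropy_submatrix_equiv hunion.isHermitian (shareUnionEquiv d hXY),
    ← partialTraceRight_ptraceSubset_union hXY, ← partialTraceLeft_ptraceSubset_union hXY]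
  exact (hunion.submatrix_equiv _).vnEntropy_le_add_partialTrace

theorem vnEntropy_ptraceSubset_le_sum (X : Finset (Fin nn))
    {M : Matrix (∀ i, d i) (∀ i, d i) ℂ} (hM : IsDensity M) :
    vnEntropy (ptraceSubset X M) ≤ ∑ i ∈ X, vnEntropy (ptraceSubset {i} M) := by
  induction X using Finset.induction_on with
  | empty => simpa using (isDensity_ptraceSubset ∅ hM).vnEntropy_le_log_card
  | insert i X hi ih =>
    rw [Finset.sum_insert hi, Finset.insert_eq]
    exact (vnEntropy_ptraceSubset_union_le (Finset.disjoint_singleton_left.2 hi) hM).trans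
      (add_le_add_right ih _)

theorem vnEntropy_ptraceSubset_singleton_le_log_card (i : Fin nn)
    {M : Matrix (∀ i, d i) (∀ i, d i) ℂ} (hM : IsDensity M) :
    vnEntropy (ptraceSubset {i} M) ≤ Real.log (Fintype.card (d i)) := by
  refine (isDensity_ptraceSubset {i} hM).vnEntropy_le_log_card.trans_eq ?_
  rw [Fintype.card_pi, Finset.prod_coe_sort {i} fun j => Fintype.card (d j),
    Finset.prod_singleton]

end Shares

section SignificantSet

theorem IsCPTP.isDensity {n m : Type*} [Fintype n] [DecidableEq n] [Fintype m]
    {E : Matrix n n ℂ →ₗ[ℂ] Matrix m m ℂ} (hE : IsCPTP E) {ρ : Matrix n n ℂ} (hρ : IsDensity ρ) :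
    IsDensity (E ρ) := by
  obtain ⟨N, K, hK, hK1⟩ := hE
  rw [hK]
  refine ⟨posSemidef_sum _ fun a _ => hρ.posSemidef.mul_mul_conjTranspose_same _, ?_⟩
  calc (∑ a, K a * ρ * (K a)ᴴ).trace = ((∑ a, (K a)ᴴ * K a) * ρ).trace := by
        simp only [Matrix.sum_mul, trace_sum, Matrix.mul_assoc, trace_mul_comm (K _)]
        simp only [trace_mul_comm ρ, Matrix.mul_assoc]
    _ = 1 := by rw [hK1, Matrix.one_mul, hρ.trace_eq_one]

variable {W : Matrix H H ℂ →ₗ[ℂ] Matrix (∀ i, d i) (∀ i, d i) ℂ} {X Y : Finset (Fin nn)}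

omit [∀ i, DecidableEq (d i)] [DecidableEq H] in
theorem Forbidden.exists_ptraceSubset_eq_trace_smul (hY : Forbidden W Y) :
    ∃ β, IsDensity β ∧ ∀ T : Matrix H H ℂ, ptraceSubset Y (W T) = T.trace • β := by
  obtain ⟨β, hβ, hconst⟩ := hY
  exact ⟨β, hβ, apply_eq_trace_smul_of_const_on_isDensity
    (f := ptraceSubsetLinearMap Y ∘ₗ W) hconst⟩

omit [DecidableEq H] in
theorem Qualified.exists_isCPTP_leftInverse (hX : Qualified W X) :
    ∃ R, IsCPTP R ∧ ∀ T : Matrix H H ℂ, R (ptraceSubset X (W T)) = T := by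
  obtain ⟨R, hR, hrec⟩ := hX
  exact ⟨R, hR, LinearMap.congr_fun (linearMap_ext_isDensity
    (f := R ∘ₗ ptraceSubsetLinearMap X ∘ₗ W) (g := LinearMap.id) hrec)⟩

/-- The Kraus operators of the reduction onto `X` of the channel with Kraus operators `K`, indexed
by the assignments on the discarded shares and the original Kraus indices. -/
def reducedKraus {J : Type*} (X : Finset (Fin nn)) (K : J → Matrix (∀ i, d i) H ℂ) :
    (∀ i : {i // i ∉ X}, d i) × J → Matrix (∀ i : {i // i ∈ X}, d i) H ℂ :=
  fun e => (K e.2).submatrix (mergeFun X · e.1) id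

omit [∀ i, DecidableEq (d i)] [DecidableEq H] in
theorem sum_reducedKraus_conj {J : Type*} [Fintype J] (X : Finset (Fin nn))
    (K : J → Matrix (∀ i, d i) H ℂ) (T : Matrix H H ℂ) :
    ∑ e, reducedKraus X K e * T * (reducedKraus X K e)ᴴ =
      ptraceSubset X (∑ j, K j * T * (K j)ᴴ) := by
  ext f g
  simp only [ptraceSubset, Matrix.sum_apply, Fintype.sum_prod_type]
  rfl

theorem vnEntropy_le_of_forbidden_of_qualified_union (hW : IsCPTP W) (hXY : Disjoint X Y)
    (hY : Forbidden W Y) (hU : Qualified W (X ∪ Y)) {σ : Matrix H H ℂ} (hσ : IsDensity σ) :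
    vnEntropy σ ≤ vnEntropy (ptraceSubset X (W σ)) := by
  obtain ⟨N, K, hK, -⟩ := hW
  obtain ⟨β, hβ, hB⟩ := hY.exists_ptraceSubset_eq_trace_smul
  obtain ⟨R, hR, hrec⟩ := hU.exists_isCPTP_leftInverse
  set S := stinespring (reducedKraus (X ∪ Y) K) with hS
  set e := shareUnionEquiv d hXY
  have hred : ∀ T : Matrix H H ℂ,
      partialTraceRight (S * T * Sᴴ) = ptraceSubset (X ∪ Y) (W T) := fun T => by
    rw [hS, partialTraceRight_stinespring_conj, sum_reducedKraus_conj, hK]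
  obtain ⟨η, hE⟩ := exists_partialTraceLeft_stinespring_conj_eq (K := reducedKraus (X ∪ Y) K) hR
    fun T => by rw [sum_reducedKraus_conj, ← hK, hrec]
  set V := S.submatrix (Prod.map e id) id
  have hV : ∀ T : Matrix H H ℂ,
      partialTraceRight (V * T * Vᴴ) = (ptraceSubset (X ∪ Y) (W T)).submatrix e e :=
    fun T => congrArg (fun M => M.submatrix e e) (hred T)
  have hVE : ∀ T : Matrix H H ℂ, partialTraceLeft (V * T * Vᴴ) = T.trace • η := fun T => by
    rw [← hE]
    ext b b'
    exact e.sum_comp fun a => (S * T * Sᴴ) (a, b) (a, b')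
  have hVX : partialTraceRight (partialTraceRight (V * σ * Vᴴ)) = ptraceSubset X (W σ) := by
    rw [hV, partialTraceRight_ptraceSubset_union]
  rw [← hVX]
  refine vnEntropy_le_of_partialTrace_const hβ (fun T => ?_) hVE hσ
  rw [hV, partialTraceLeft_ptraceSubset_union, hB]

end SignificantSet

section RampScheme

theorem sum_powersetCard_sum {ι M : Type*} [AddCommMonoid M] (s : Finset ι) {L : ℕ} (hL : 1 ≤ L)
    (f : ι → M) :
    ∑ X ∈ s.powersetCard L, ∑ i ∈ X, f i = (s.card - 1).choose (L - 1) • ∑ i ∈ s, f i := by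
  classical
  have hswap : ∑ X ∈ s.powersetCard L, ∑ i ∈ X, f i =
      ∑ i ∈ s, ∑ X ∈ s.powersetCard L with {i} ⊆ X, f i :=
    Finset.sum_comm' fun X i => by
      simp only [Finset.mem_filter, Finset.mem_powersetCard, Finset.singleton_subset_iff]
      exact ⟨fun h => ⟨h, h.1.1 h.2⟩, And.left⟩
  rw [hswap, Finset.smul_sum]
  refine Finset.sum_congr rfl fun i hi => ?_
  rw [Finset.sum_const, Finset.card_filter_powersetCard_subset _ _ _
    (Finset.singleton_subset_iff.2 hi) hL, Finset.card_singleton]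

theorem one_div_mul_le_one_div_card_mul_sum {ι 𝕜 : Type*} [Field 𝕜] [LinearOrder 𝕜]
    [IsStrictOrderedRing 𝕜] {s : Finset ι} {L : ℕ} (hL : 1 ≤ L) (hLs : L ≤ s.card) {f : ι → 𝕜}
    {c : 𝕜} (h : ∀ X ⊆ s, X.card = L → c ≤ ∑ i ∈ X, f i) :
    1 / (L : 𝕜) * c ≤ 1 / (s.card : 𝕜) * ∑ i ∈ s, f i := by
  classical
  set n := s.card with hn
  set C := (n - 1).choose (L - 1)
  have hsum : n.choose L * c ≤ C * ∑ i ∈ s, f i := by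
    rw [← nsmul_eq_mul, ← nsmul_eq_mul, ← sum_powersetCard_sum s hL, hn, ← Finset.card_powersetCard]
    refine Finset.card_nsmul_le_sum _ _ _ fun X hX => ?_
    obtain ⟨hXs, hXL⟩ := Finset.mem_powersetCard.1 hX
    exact h X hXs hXL
  have hchoose : (n : 𝕜) * C = n.choose L * L := by
    have := Nat.add_one_mul_choose_eq (n - 1) (L - 1)
    rw [Nat.sub_add_cancel hL, Nat.sub_add_cancel (hL.trans hLs)] at this
    exact_mod_cast this
  have hLpos : (0 : 𝕜) < L := by exact_mod_cast hL
  have hnpos : (0 : 𝕜) < n := by exact_mod_cast hL.trans hLs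
  have hCpos : (0 : 𝕜) < C := by exact_mod_cast Nat.choose_pos (Nat.sub_le_sub_right hLs 1)
  rw [one_div_mul_eq_div, one_div_mul_eq_div, div_le_div_iff₀ hLpos hnpos]
  refine le_of_mul_le_mul_left ?_ hCpos
  calc C * (c * n) = L * (n.choose L * c) := by linear_combination c * hchoose
    _ ≤ L * (C * ∑ i ∈ s, f i) := by gcongr
    _ = C * ((∑ i ∈ s, f i) * L) := by ring

variable {W : Matrix H H ℂ →ₗ[ℂ] Matrix (∀ i, d i) (∀ i, d i) ℂ}

theorem vnEntropy_le_sum_vnEntropy_of_card_eq {k L : ℕ} (hLk : L ≤ k) (hkn : k ≤ nn)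
    (hW : IsCPTP W) (hQ : ∀ X : Finset (Fin nn), X.card = k → Qualified W X)
    (hF : ∀ X : Finset (Fin nn), X.card = k - L → Forbidden W X) {σ : Matrix H H ℂ}
    (hσ : IsDensity σ) {X : Finset (Fin nn)} (hX : X.card = L) :
    vnEntropy σ ≤ ∑ i ∈ X, vnEntropy (ptraceSubset {i} (W σ)) := by
  obtain ⟨Y, hYX, hY⟩ : ∃ Y ⊆ Xᶜ, Y.card = k - L := Finset.exists_subset_card_eq (by
    rw [Finset.card_compl, hX, Fintype.card_fin]
    omega)
  have hXY : Disjoint X Y := disjoint_compl_right.mono_right hYX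
  have hcard : (X ∪ Y).card = k := by
    rw [Finset.card_union_of_disjoint hXY, hX, hY, Nat.add_sub_cancel' hLk]
  exact (vnEntropy_le_of_forbidden_of_qualified_union hW hXY (hF Y hY) (hQ _ hcard) hσ).trans
    (vnEntropy_ptraceSubset_le_sum X (hW.isDensity hσ))

theorem isDensity_sum_smul {n : Type*} [Fintype n] {ι : Type*} [Fintype ι] {p : ι → ℝ}
    {ρ : ι → Matrix n n ℂ} (hp : ∀ i, 0 ≤ p i) (hsum : ∑ i, p i = 1)
    (hρ : ∀ i, IsDensity (ρ i)) : IsDensity (∑ i, p i • ρ i) := by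
  refine ⟨posSemidef_sum _ fun i _ => (hρ i).posSemidef.smul (hp i), ?_⟩
  simp only [trace_sum, trace_smul, (hρ _).trace_eq_one]
  rw [← Finset.sum_smul, hsum, one_smul]

theorem isDensity_inv_card_smul_one {n : Type*} [Fintype n] [DecidableEq n] [Nonempty n] :
    IsDensity ((Fintype.card n : ℂ)⁻¹ • (1 : Matrix n n ℂ)) := by
  simpa only [trace_one] using isDensity_inv_trace_smul (PosSemidef.one (n := n) (R := ℂ))
    (by simp)

theorem stmt_18_general {k L : ℕ} (hL : 1 ≤ L) (hLk : L ≤ k) (hkn : k ≤ nn)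
    (hW : IsCPTP W) (hQ : ∀ X : Finset (Fin nn), X.card = k → Qualified W X)
    (hF : ∀ X : Finset (Fin nn), X.card = k - L → Forbidden W X) :
    (∀ σ : Matrix H H ℂ, IsDensity σ → 1 / (L : ℝ) * vnEntropy σ ≤
      1 / (nn : ℝ) * ∑ i, vnEntropy (ptraceSubset {i} (W σ))) ∧
    1 / (L : ℝ) * Real.log (Fintype.card H) ≤
      1 / (nn : ℝ) * ∑ i, Real.log (Fintype.card (d i)) := by
  have hbound : ∀ σ : Matrix H H ℂ, IsDensity σ → 1 / (L : ℝ) * vnEntropy σ ≤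
      1 / (nn : ℝ) * ∑ i, vnEntropy (ptraceSubset {i} (W σ)) := fun σ hσ => by
    have := one_div_mul_le_one_div_card_mul_sum hL
      ((hLk.trans hkn).trans_eq (Finset.card_fin nn).symm) fun _ _ =>
        vnEntropy_le_sum_vnEntropy_of_card_eq hLk hkn hW hQ hF hσ
    rwa [Finset.card_fin] at this
  refine ⟨hbound, ?_⟩
  rcases isEmpty_or_nonempty H with _ | _
  · rw [Fintype.card_eq_zero, Nat.cast_zero, Real.log_zero, mul_zero]
    exact mul_nonneg (by positivity) (Finset.sum_nonneg fun i _ => Real.log_natCast_nonneg _)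
  · rw [← vnEntropy_inv_card_smul_one]
    refine (hbound _ isDensity_inv_card_smul_one).trans ?_
    gcongr with i
    exact vnEntropy_ptraceSubset_singleton_le_log_card i (hW.isDensity isDensity_inv_card_smul_one)

end RampScheme

/-- Coding efficiency of `(k, L, n)`-threshold ramp QSS schemes: for every (finitely
supported) probability measure `μ = (p, ρs)` on pure states with barycenter `σ_μ`,
`(1/L) H(σ_μ) ≤ (1/n) ∑ i, H(W_i(σ_μ))`; in particular
`(1/L) log dim H ≤ (1/n) ∑ i, log dim H_i`. -/
theorem stmt_18 {k L : ℕ} (hL : 1 ≤ L) (hLk : L ≤ k) (hkn : k ≤ nn)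
    (W : Matrix H H ℂ →ₗ[ℂ] Matrix ((i : Fin nn) → d i) ((i : Fin nn) → d i) ℂ)
    (hW : IsRampQSS k L W) :
    (∀ (ι : Type) (_ : Fintype ι) (p : ι → ℝ), (∀ i, 0 ≤ p i) → ∑ i, p i = 1 →
      ∀ ρs : ι → Matrix H H ℂ, (∀ i, IsPure (ρs i)) →
        (1 / (L : ℝ)) * vnEntropy (∑ j, p j • ρs j) ≤
          (1 / (nn : ℝ)) * ∑ i : Fin nn, vnEntropy (ptraceSubset {i} (W (∑ j, p j • ρs j)))) ∧
      (1 / (L : ℝ)) * Real.log (Fintype.card H) ≤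
        (1 / (nn : ℝ)) * ∑ i : Fin nn, Real.log (Fintype.card (d i)) := by
  have h := stmt_18_general hL hLk hkn hW.1 (fun X hX => (hW.2.1 X).2 hX.ge)
    fun X hX => (hW.2.2 X).2 hX.le
  exact ⟨fun _ _ _ hp hsum _ hρ => h.1 _ (isDensity_sum_smul hp hsum fun i => (hρ i).1), h.2⟩
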